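/- arXiv:1308.5041 — 2 statements merged into one kernel-verified Lean document; each statement's English description precedes it below -/
import Mathlib

section
/- Let q be a fixed prime power. Then π_q(q^n)·(q−1)·n/q^{n+1} tends to 1 as n → ∞; equivalently, π_q(q^n) = (q/(q−1))·(q^n/n)·(1 + o(1)). -/
/-!
The polynomial `X ^ q ^ n - X` over `𝔽_q` is squarefree, and its monic irreducible factors are
exactly the monic irreducible polynomials of degree dividing `n`. Comparing degrees, the number
`a d` of monic irreducibles of degree `d` satisfies `∑ d ∣ n, d * a d = q ^ n`; proper divisors of
`n` are at most `n / 2`, so they contribute `O(q ^ (n / 2))` and `a n ~ q ^ n / n`. Hence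
`a (n + 1) / a n → q`, and the Stolz–Cesàro theorem shows that `∑ d < n, a d ~ a n / (q - 1)`.
-/

open Polynomial UniqueFactorizationMonoid Filter Topology Asymptotics

theorem isEquivalent_sum_range_of_sub_isEquivalent {b v : ℕ → ℝ} (hv : 0 ≤ v)
    (hsum : Tendsto (fun n ↦ ∑ k ∈ Finset.range n, v k) atTop atTop)
    (hb : (fun n ↦ b (n + 1) - b n) ~[atTop] v) :
    b ~[atTop] fun n ↦ ∑ k ∈ Finset.range n, v k := by
  have htelescope : (fun n ↦ b n - b 0) ~[atTop] fun n ↦ ∑ k ∈ Finset.range n, v k := by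
    refine (hb.isLittleO.sum_range hv hsum).congr_left fun n ↦ ?_
    simp only [Pi.sub_apply]
    rw [Finset.sum_sub_distrib, Finset.sum_range_sub]
  simpa only [sub_add_cancel] using
    htelescope.add_const_of_norm_tendsto_atTop (c := b 0) (tendsto_norm_atTop_atTop.comp hsum)

theorem sum_range_isEquivalent_of_tendsto_div {v : ℕ → ℝ} {l : ℝ} (hv : 0 ≤ v) (hl : 1 < l)
    (hratio : Tendsto (fun n ↦ v (n + 1) / v n) atTop (𝓝 l)) :
    (fun n ↦ ∑ k ∈ Finset.range n, v k) ~[atTop] fun n ↦ v n / (l - 1) := by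
  have hl' : l - 1 ≠ 0 := by linarith
  have hv_ne : ∀ᶠ n in atTop, v n ≠ 0 := by
    filter_upwards [hratio.eventually_ne (by linarith : l ≠ 0)] with n hn h
    exact hn (by rw [h, div_zero])
  have hsum : Tendsto (fun n ↦ ∑ k ∈ Finset.range n, v k) atTop atTop := by
    rw [← not_summable_iff_tendsto_nat_atTop_of_nonneg hv]
    refine not_summable_of_ratio_test_tendsto_gt_one hl ?_
    simpa only [Real.norm_of_nonneg (hv _)] using hratio
  refine (isEquivalent_sum_range_of_sub_isEquivalent hv hsum ?_).symm
  refine isEquivalent_of_tendsto_one ?_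
  have hlim := (hratio.sub_const 1).div_const (l - 1)
  rw [div_self hl'] at hlim
  refine hlim.congr' ?_
  filter_upwards [hv_ne] with n hn
  simp only [Pi.div_apply]
  field_simp

theorem isLittleO_pow_half_succ_pow {r : ℝ} (hr : 1 < r) :
    (fun n : ℕ ↦ r ^ (n / 2 + 1)) =o[atTop] fun n ↦ r ^ n := by
  have hsqrt : 1 < √r := (Real.lt_sqrt zero_le_one).2 (by rwa [one_pow])
  have hsq : √r ^ 2 = r := Real.sq_sqrt (by positivity)
  have hbound : (fun n : ℕ ↦ r ^ (n / 2 + 1)) =O[atTop] fun n ↦ √r ^ n := by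
    refine .of_bound r (.of_forall fun n ↦ ?_)
    rw [Real.norm_of_nonneg (by positivity), Real.norm_of_nonneg (by positivity)]
    calc r ^ (n / 2 + 1) = r * √r ^ (2 * (n / 2)) := by rw [pow_mul, hsq, pow_succ']
      _ ≤ r * √r ^ n := by
        gcongr
        · exact hsqrt.le
        · exact Nat.mul_div_le n 2
  have hlt : √r < r := (Real.sqrt_lt' (by positivity)).2 (lt_self_pow₀ hr one_lt_two)
  exact hbound.trans_isLittleO (isLittleO_pow_pow_of_lt_left (by positivity) hlt)

theorem sum_natDegree_primeFactors_of_squarefree {K : Type*} [Field K] [DecidableEq K] {p : K[X]}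
    (hp : Squarefree p) : ∑ f ∈ primeFactors p, f.natDegree = p.natDegree := by
  have hassoc : Associated (radical p) p := radical_associated hp.isRadical hp.ne_zero
  rw [← natDegree_eq_of_degree_eq (degree_eq_degree_of_associated hassoc), radical]
  refine (natDegree_prod _ _ fun f hf ↦ ?_).symm
  exact (irreducible_of_normalized_factor f (mem_primeFactors.1 hf)).ne_zero

/-- The set of monic irreducible polynomials of degree `n`, whose cardinality is the summand of the
prime-counting function of `R[X]` in degree `n`. -/
def monicIrreducibles (R : Type*) [Semiring R] (n : ℕ) : Set R[X] :=
  {f | f.Monic ∧ Irreducible f ∧ f.natDegree = n}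

section FiniteSemiring

variable (R : Type*) [Semiring R] [Finite R]

theorem finite_monicIrreducibles (n : ℕ) : (monicIrreducibles R n).Finite := by
  have : Finite (degreeLT R (n + 1)) := .of_equiv _ (degreeLTEquiv R (n + 1)).symm.toEquiv
  refine (Set.toFinite (degreeLT R (n + 1) : Set R[X])).subset fun f hf ↦ ?_
  have hdeg : f.natDegree < n + 1 := Nat.lt_succ_of_le hf.2.2.le
  exact mem_degreeLT.2 (degree_le_natDegree.trans_lt (Nat.cast_lt.2 hdeg))

theorem card_monic_irreducible_natDegree_le (n : ℕ) :
    Nat.card {f : R[X] // f.Monic ∧ Irreducible f ∧ f.natDegree ≤ n} =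
      ∑ d ∈ Finset.range (n + 1), (monicIrreducibles R d).ncard := by
  classical
  have hdisj : (Finset.range (n + 1) : Set ℕ).PairwiseDisjoint
      fun d ↦ (finite_monicIrreducibles R d).toFinset := by
    intro d _ e _ hde
    refine Finset.disjoint_left.2 fun f hfd hfe ↦ hde ?_
    rw [Set.Finite.mem_toFinset] at hfd hfe
    exact hfd.2.2.symm.trans hfe.2.2
  simp_rw [Set.ncard_eq_toFinset_card _ (finite_monicIrreducibles R _)]
  rw [← Finset.card_biUnion hdisj]
  refine Nat.subtype_card _ fun f ↦ ?_
  simp only [monicIrreducibles, Finset.mem_biUnion, Finset.mem_range, Nat.lt_succ_iff,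
    Set.Finite.mem_toFinset, Set.mem_ofPred_eq]
  constructor
  · rintro ⟨d, hd, hmonic, hirr, rfl⟩
    exact ⟨hmonic, hirr, hd⟩
  · rintro ⟨hmonic, hirr, hd⟩
    exact ⟨f.natDegree, hd, hmonic, hirr, rfl⟩

end FiniteSemiring

section FiniteField

variable (F : Type*) [Field F] [Finite F]

theorem squarefree_X_pow_card_pow_sub_X {n : ℕ} (hn : n ≠ 0) :
    Squarefree (X ^ Nat.card F ^ n - X : F[X]) := by
  have := Fintype.ofFinite F
  obtain ⟨p, _⟩ := CharP.exists F
  have hdvd : p ∣ Nat.card F := by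
    rw [← CharP.cast_eq_zero_iff F p, ← Fintype.card_eq_nat_card, FiniteField.cast_card_eq_zero]
  exact (galois_poly_separable p _ (hdvd.trans (dvd_pow_self _ hn))).squarefree

theorem mem_primeFactors_X_pow_card_pow_sub_X [DecidableEq F] {n : ℕ} (hn : n ≠ 0) {f : F[X]} :
    f ∈ primeFactors (X ^ Nat.card F ^ n - X : F[X]) ↔
      f.Monic ∧ Irreducible f ∧ f.natDegree ∣ n := by
  rw [mem_primeFactors,
    Polynomial.mem_normalizedFactors_iff (squarefree_X_pow_card_pow_sub_X F hn).ne_zero,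
    and_left_comm]
  refine and_congr_right fun _ ↦ and_congr_right fun hf ↦ ?_
  exact hf.natDegree_dvd_iff_dvd_X_pow_card_pow_sub_X.symm

theorem coe_filter_primeFactors_natDegree_eq [DecidableEq F] {n d : ℕ} (hn : n ≠ 0) (hd : d ∣ n) :
    ({f ∈ primeFactors (X ^ Nat.card F ^ n - X : F[X]) | f.natDegree = d} : Finset F[X]) =
      monicIrreducibles F d := by
  ext f
  simp only [Finset.coe_filter, mem_primeFactors_X_pow_card_pow_sub_X F hn, monicIrreducibles,
    Set.mem_ofPred_eq]
  constructor
  · rintro ⟨⟨hmonic, hirr, -⟩, hdeg⟩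
    exact ⟨hmonic, hirr, hdeg⟩
  · rintro ⟨hmonic, hirr, rfl⟩
    exact ⟨⟨hmonic, hirr, hd⟩, rfl⟩

theorem sum_divisors_mul_ncard_monicIrreducibles {n : ℕ} (hn : n ≠ 0) :
    ∑ d ∈ n.divisors, d * (monicIrreducibles F d).ncard = Nat.card F ^ n := by
  classical
  set P : F[X] := X ^ Nat.card F ^ n - X
  have hmaps : ∀ f ∈ primeFactors P, f.natDegree ∈ n.divisors := fun f hf ↦
    Nat.mem_divisors.2 ⟨((mem_primeFactors_X_pow_card_pow_sub_X F hn).1 hf).2.2, hn⟩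
  calc ∑ d ∈ n.divisors, d * (monicIrreducibles F d).ncard
      = ∑ d ∈ n.divisors, ∑ f ∈ primeFactors P with f.natDegree = d, f.natDegree := by
        refine Finset.sum_congr rfl fun d hd ↦ ?_
        rw [Finset.sum_congr rfl fun f hf ↦ (Finset.mem_filter.1 hf).2, Finset.sum_const,
          smul_eq_mul, mul_comm, ← Set.ncard_coe_finset,
          coe_filter_primeFactors_natDegree_eq F hn (Nat.dvd_of_mem_divisors hd)]
    _ = ∑ f ∈ primeFactors P, f.natDegree := Finset.sum_fiberwise_of_maps_to hmaps _
    _ = P.natDegree :=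
        sum_natDegree_primeFactors_of_squarefree (squarefree_X_pow_card_pow_sub_X F hn)
    _ = Nat.card F ^ n := FiniteField.X_pow_card_pow_sub_X_natDegree_eq F hn Finite.one_lt_card

theorem mul_ncard_monicIrreducibles_le (n : ℕ) :
    n * (monicIrreducibles F n).ncard ≤ Nat.card F ^ n := by
  rcases eq_or_ne n 0 with rfl | hn
  · simp
  rw [← sum_divisors_mul_ncard_monicIrreducibles F hn]
  exact Finset.single_le_sum (f := fun d ↦ d * (monicIrreducibles F d).ncard)
    (fun _ _ ↦ Nat.zero_le _) (Nat.mem_divisors_self n hn)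

theorem card_pow_le_mul_ncard_monicIrreducibles_add {n : ℕ} (hn : n ≠ 0) :
    Nat.card F ^ n ≤ n * (monicIrreducibles F n).ncard + Nat.card F ^ (n / 2 + 1) := by
  have hhalf : ∀ d ∈ n.properDivisors, d < n / 2 + 1 := by
    intro d hd
    obtain ⟨k, hk, rfl⟩ := (Nat.mem_properDivisors_iff_exists hn).1 hd
    rw [Nat.lt_succ_iff, Nat.le_div_iff_mul_le two_pos]
    exact Nat.mul_le_mul_left d hk
  have hproper : ∑ d ∈ n.properDivisors, d * (monicIrreducibles F d).ncard ≤
      Nat.card F ^ (n / 2 + 1) :=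
    calc ∑ d ∈ n.properDivisors, d * (monicIrreducibles F d).ncard
        ≤ ∑ d ∈ n.properDivisors, Nat.card F ^ d :=
          Finset.sum_le_sum fun d _ ↦ mul_ncard_monicIrreducibles_le F d
      _ ≤ Nat.card F ^ (n / 2 + 1) := (Nat.geomSum_lt Finite.one_lt_card hhalf).le
  rw [← sum_divisors_mul_ncard_monicIrreducibles F hn, ← Nat.insert_self_properDivisors hn,
    Finset.sum_insert Nat.self_notMem_properDivisors]
  gcongr

theorem ncard_monicIrreducibles_isEquivalent :
    (fun n ↦ ((monicIrreducibles F n).ncard : ℝ)) ~[atTop]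
      fun n : ℕ ↦ (Nat.card F : ℝ) ^ n / n := by
  have hmul : (fun n : ℕ ↦ (n : ℝ) * (monicIrreducibles F n).ncard) ~[atTop]
      fun n ↦ (Nat.card F : ℝ) ^ n := by
    refine IsBigO.trans_isLittleO (.of_norm_eventuallyLE ?_)
      (isLittleO_pow_half_succ_pow (Nat.one_lt_cast.2 Finite.one_lt_card))
    filter_upwards [eventually_ne_atTop 0] with n hn
    have hupper : (n : ℝ) * (monicIrreducibles F n).ncard ≤ (Nat.card F : ℝ) ^ n := by
      exact_mod_cast mul_ncard_monicIrreducibles_le F n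
    have hlower : (Nat.card F : ℝ) ^ n ≤
        n * (monicIrreducibles F n).ncard + (Nat.card F : ℝ) ^ (n / 2 + 1) := by
      exact_mod_cast card_pow_le_mul_ncard_monicIrreducibles_add F hn
    rw [Pi.sub_apply, Real.norm_of_nonpos (by linarith)]
    linarith
  refine (hmul.div (.refl (u := fun n : ℕ ↦ (n : ℝ)))).congr_left ?_
  filter_upwards [eventually_ne_atTop 0] with n hn
  exact mul_div_cancel_left₀ _ (Nat.cast_ne_zero.2 hn)

theorem tendsto_ncard_monicIrreducibles_succ_div :
    Tendsto (fun n ↦ ((monicIrreducibles F (n + 1)).ncard : ℝ) / (monicIrreducibles F n).ncard)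
      atTop (𝓝 (Nat.card F)) := by
  have hequiv := ncard_monicIrreducibles_isEquivalent F
  refine ((hequiv.comp_tendsto (tendsto_add_atTop_nat 1)).div hequiv).symm.tendsto_nhds ?_
  have hlim := (tendsto_natCast_div_add_atTop (1 : ℝ)).const_mul (Nat.card F : ℝ)
  rw [mul_one] at hlim
  refine hlim.congr' ?_
  filter_upwards [eventually_ne_atTop 0] with n hn
  have hcard : (Nat.card F : ℝ) ≠ 0 := Nat.cast_ne_zero.2 Finite.card_pos.ne'
  simp only [Pi.div_apply, Function.comp_apply, Nat.cast_add, Nat.cast_one, pow_succ]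
  field_simp

theorem sum_range_ncard_monicIrreducibles_isEquivalent :
    (fun n ↦ ∑ d ∈ Finset.range n, ((monicIrreducibles F d).ncard : ℝ)) ~[atTop]
      fun n : ℕ ↦ (Nat.card F : ℝ) ^ n / n / (Nat.card F - 1) := by
  have hnonneg : (0 : ℕ → ℝ) ≤ fun n ↦ ((monicIrreducibles F n).ncard : ℝ) :=
    fun _ ↦ Nat.cast_nonneg _
  have hcard : (1 : ℝ) < Nat.card F := Nat.one_lt_cast.2 Finite.one_lt_card
  exact (sum_range_isEquivalent_of_tendsto_div hnonneg hcard
    (tendsto_ncard_monicIrreducibles_succ_div F)).trans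
    ((ncard_monicIrreducibles_isEquivalent F).div .refl)

theorem card_monic_irreducible_natDegree_le_isEquivalent :
    (fun n : ℕ ↦
      (Nat.card {f : F[X] // f.Monic ∧ Irreducible f ∧ f.natDegree ≤ n} : ℝ)) ~[atTop]
      fun n ↦ (Nat.card F : ℝ) ^ (n + 1) / n / (Nat.card F - 1) := by
  have hsucc : (fun n : ℕ ↦ ((n + 1 : ℕ) : ℝ)) ~[atTop] fun n ↦ (n : ℝ) := by
    simpa only [Nat.cast_add, Nat.cast_one] using
      IsEquivalent.refl.add_const_of_norm_tendsto_atTop (c := (1 : ℝ))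
        (tendsto_norm_atTop_atTop.comp tendsto_natCast_atTop_atTop)
  have hsum := (sum_range_ncard_monicIrreducibles_isEquivalent F).comp_tendsto
    (tendsto_add_atTop_nat 1)
  have hden : (fun n : ℕ ↦ (Nat.card F : ℝ) ^ (n + 1) / (n + 1 : ℕ) / (Nat.card F - 1)) ~[atTop]
      fun n ↦ (Nat.card F : ℝ) ^ (n + 1) / n / (Nat.card F - 1) :=
    (IsEquivalent.refl.div hsucc).div .refl
  simp only [card_monic_irreducible_natDegree_le, Nat.cast_sum]
  exact hsum.trans hden

end FiniteField

theorem stmt_2 (q : ℕ) (hq : IsPrimePow q) (F : Type*) [Field F] [Fintype F]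
    (hF : Fintype.card F = q) :
    Filter.Tendsto
      (fun n : ℕ =>
        (Nat.card {f : Polynomial F // f.Monic ∧ Irreducible f ∧ f.natDegree ≤ n} : ℝ) *
          (q - 1) * n / (q : ℝ) ^ (n + 1))
      Filter.atTop (nhds 1) := by
  rw [Fintype.card_eq_nat_card] at hF
  subst hF
  have hcard : 0 < (Nat.card F : ℝ) - 1 := sub_pos.2 (Nat.one_lt_cast.2 Finite.one_lt_card)
  have hne : ∀ᶠ n : ℕ in atTop, (Nat.card F : ℝ) ^ (n + 1) / n / (Nat.card F - 1) ≠ 0 := by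
    filter_upwards [eventually_ne_atTop 0] with n hn
    have : (0 : ℝ) < Nat.card F := by linarith
    positivity
  refine ((isEquivalent_iff_tendsto_one hne).1
    (card_monic_irreducible_natDegree_le_isEquivalent F)).congr fun n ↦ ?_
  simp only [Pi.div_apply, div_div_eq_mul_div]
end

section
/- For all real q ≥ 2 and all integers n ≥ 1 and m ≥ 1, one has |∑_{k=1}^{n} q^k/k − q^{n+1}/((q−1)·n) − ∑_{j=1}^{m−1} (q^n/n^{j+1})·∑_{i=0}^{j} (−1)^{j−i}·i!·S(j,i)·q^i/(q−1)^{i+1}| ≤ 3^{m+3}·m!·q^{n−1}/n^{m+1} + 2^{m+1}·m!/n. -/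
/-- The Stirling numbers of the second kind: `stirling2 n k` is the number of
partitions of a set with `n` elements into `k` nonempty blocks. -/
def stirling2 : ℕ → ℕ → ℕ
  | 0, 0 => 1
  | 0, _ + 1 => 0
  | _ + 1, 0 => 0
  | n + 1, k + 1 => (k + 1) * stirling2 n (k + 1) + stirling2 n k

/-!
Put `d = n - k`. The finite geometric expansion of `1 / (n - d)` in powers of `d / n` turns the sum
into `∑ j < m, q ^ n / n ^ (j + 1) * ∑ d < n, d ^ j * q⁻¹ ^ d` plus a remainder. Completing the
inner sums to series gives the main terms, since expanding `d ^ j` in rising factorials evaluates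
`∑ d, d ^ j * q⁻¹ ^ d` through Stirling numbers. The remainder and the tails of the completed
series are both nonnegative, and each is dominated by series of the form
`∑ d, (d + 1) ⋯ (d + k) * q⁻¹ ^ d`, whose value is `k ! / (1 - q⁻¹) ^ (k + 1)`.
-/

open Finset Polynomial
open scoped Nat

theorem stirling2_eq_stirlingSecond : ∀ n k : ℕ, stirling2 n k = n.stirlingSecond k
  | 0, 0 => rfl
  | 0, _ + 1 => rfl
  | _ + 1, 0 => rfl
  | n + 1, k + 1 => by
    rw [stirling2, Nat.stirlingSecond_succ_succ, stirling2_eq_stirlingSecond n (k + 1),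
      stirling2_eq_stirlingSecond n k]

section Expansions

theorem pow_eq_sum_stirlingSecond_mul_descPochhammer {R : Type*} [CommRing R] (x : R) (j : ℕ) :
    x ^ j = ∑ i ∈ range (j + 1), (j.stirlingSecond i : R) * (descPochhammer R i).eval x := by
  induction j with
  | zero => simp
  | succ j ih =>
    have hshift : ∑ i ∈ range (j + 1), (j.stirlingSecond i : R) * (i * (descPochhammer R i).eval x)
        = ∑ i ∈ range (j + 1), ((i + 1) * j.stirlingSecond (i + 1) : R) *
            (descPochhammer R (i + 1)).eval x := by
      rw [sum_range_succ', sum_range_succ _ j, Nat.stirlingSecond_eq_zero_of_lt j.lt_succ_self]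
      simp only [Nat.cast_zero, zero_mul, mul_zero, add_zero, Nat.cast_succ]
      exact sum_congr rfl fun i _ => by ring
    calc x ^ (j + 1)
        = ∑ i ∈ range (j + 1), (j.stirlingSecond i : R) * (descPochhammer R (i + 1)).eval x +
            ∑ i ∈ range (j + 1), (j.stirlingSecond i : R) * (i * (descPochhammer R i).eval x) := by
          rw [pow_succ, ih, sum_mul, ← sum_add_distrib]
          refine sum_congr rfl fun i _ => ?_
          rw [descPochhammer_succ_eval]
          ring
      _ = ∑ i ∈ range (j + 1), ((j + 1).stirlingSecond (i + 1) : R) *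
            (descPochhammer R (i + 1)).eval x := by
          rw [hshift, ← sum_add_distrib]
          refine sum_congr rfl fun i _ => ?_
          rw [Nat.stirlingSecond_succ_succ]
          push_cast
          ring
      _ = _ := by
          rw [sum_range_succ' _ (j + 1), Nat.stirlingSecond_succ_zero, Nat.cast_zero, zero_mul,
            add_zero]

theorem pow_eq_sum_stirlingSecond_mul_ascPochhammer {R : Type*} [CommRing R] (x : R) (j : ℕ) :
    x ^ j = ∑ i ∈ range (j + 1),
      (-1) ^ (j - i) * (j.stirlingSecond i : R) * (ascPochhammer R i).eval x := by
  obtain ⟨y, rfl⟩ : ∃ y, x = -y := ⟨-x, (neg_neg x).symm⟩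
  rw [neg_pow, pow_eq_sum_stirlingSecond_mul_descPochhammer y, mul_sum]
  refine sum_congr rfl fun i hi => ?_
  have hij : i ≤ j := Nat.lt_succ_iff.1 (mem_range.1 hi)
  have hsign : (-1 : R) ^ j = (-1) ^ (j - i) * (-1) ^ i := by
    rw [← pow_add, Nat.sub_add_cancel hij]
  rw [ascPochhammer_eval_neg_eq_descPochhammer, hsign]
  ring

theorem one_div_sub_eq_geom_sum_add {K : Type*} [Field K] {x y : K} (hx : x ≠ 0) (hxy : x - y ≠ 0)
    (m : ℕ) :
    1 / (x - y) = ∑ j ∈ range m, y ^ j / x ^ (j + 1) + y ^ m / (x ^ m * (x - y)) := by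
  induction m with
  | zero => simp
  | succ m ih =>
    rw [ih, sum_range_succ, add_assoc, add_right_inj]
    field_simp
    ring

variable {K : Type*} [Field K] {q : K}

theorem sum_Icc_pow_div_eq_sum_range_inv_pow (hq : q ≠ 0) (n : ℕ) :
    ∑ k ∈ Icc 1 n, q ^ k / k = q ^ n * ∑ d ∈ range n, 1 / (n - d : K) * q⁻¹ ^ d := by
  rw [mul_sum, range_eq_Ico, ← Ico_add_one_right_eq_Icc]
  have hreflect := sum_Ico_reflect (fun k : ℕ => q ^ k / (k : K)) 0 n.le_succ
  rw [Nat.sub_zero, Nat.add_sub_cancel_left] at hreflect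
  rw [← hreflect]
  refine sum_congr rfl fun d hd => ?_
  have hdn : d ≤ n := (mem_Ico.1 hd).2.le
  rw [Nat.cast_sub hdn, pow_sub₀ q hq hdn, inv_pow]
  ring

/-- The error made in `∑ k ∈ Icc 1 n, q ^ k / k`, reindexed by `d = n - k`, when each
`1 / (n - d)` is replaced by the first `m` terms of its geometric expansion in powers of `d / n`. -/
def truncationError (q : K) (n m : ℕ) : K :=
  q ^ n * ∑ d ∈ range n, (d : K) ^ m / ((n : K) ^ m * (n - d)) * q⁻¹ ^ d

theorem sum_Icc_pow_div_eq_sum_add_truncationError [CharZero K] (hq : q ≠ 0) (n m : ℕ) :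
    ∑ k ∈ Icc 1 n, q ^ k / k =
      ∑ j ∈ range m, q ^ n / (n : K) ^ (j + 1) * ∑ d ∈ range n, (d : K) ^ j * q⁻¹ ^ d +
        truncationError q n m := by
  have hexpand : ∀ d ∈ range n, 1 / (n - d : K) * q⁻¹ ^ d =
      ∑ j ∈ range m, (d : K) ^ j / (n : K) ^ (j + 1) * q⁻¹ ^ d +
        (d : K) ^ m / ((n : K) ^ m * (n - d)) * q⁻¹ ^ d := by
    intro d hd
    have hdn : d < n := mem_range.1 hd
    have hn : (n : K) ≠ 0 := Nat.cast_ne_zero.2 (by lia)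
    have hnd : (n - d : K) ≠ 0 := sub_ne_zero.2 (Nat.cast_injective.ne hdn.ne')
    rw [one_div_sub_eq_geom_sum_add hn hnd m, add_mul, sum_mul]
  rw [sum_Icc_pow_div_eq_sum_range_inv_pow hq, sum_congr rfl hexpand, sum_add_distrib, mul_add,
    sum_comm, mul_sum, truncationError]
  congr 1
  refine sum_congr rfl fun j _ => ?_
  rw [mul_sum, mul_sum]
  exact sum_congr rfl fun d _ => by ring

end Expansions

section GeometricSeries

variable {𝕜 : Type*} [NormedField 𝕜] {r : 𝕜}

theorem hasSum_succ_ascFactorial_mul_geometric (k : ℕ) (hr : ‖r‖ < 1) :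
    HasSum (fun d : ℕ => ((d + 1).ascFactorial k : 𝕜) * r ^ d) (k ! / (1 - r) ^ (k + 1)) := by
  convert! (hasSum_choose_mul_geometric_of_norm_lt_one k hr).mul_left (k ! : 𝕜) using 1
  · funext d
    rw [Nat.ascFactorial_eq_factorial_mul_choose]
    push_cast
    ring
  · rw [mul_one_div]

theorem hasSum_ascFactorial_mul_geometric {k : ℕ} (hk : k ≠ 0) (hr : ‖r‖ < 1) :
    HasSum (fun d : ℕ => (d.ascFactorial k : 𝕜) * r ^ d) (k ! * r / (1 - r) ^ (k + 1)) := by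
  rw [← hasSum_nat_add_iff' 1]
  obtain ⟨k, rfl⟩ := Nat.exists_eq_add_one_of_ne_zero hk
  convert! (hasSum_succ_ascFactorial_mul_geometric (k + 1) hr).mul_right r using 1
  · funext d
    ring
  · rw [sum_range_one, Nat.zero_ascFactorial]
    ring

theorem hasSum_pow_mul_geometric {j : ℕ} (hj : j ≠ 0) (hr : ‖r‖ < 1) :
    HasSum (fun d : ℕ => (d : 𝕜) ^ j * r ^ d)
      (∑ i ∈ range (j + 1),
        (-1) ^ (j - i) * (j.stirlingSecond i : 𝕜) * (i ! * r / (1 - r) ^ (i + 1))) := by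
  have hterm : ∀ i ∈ range (j + 1), HasSum
      (fun d : ℕ => (-1) ^ (j - i) * (j.stirlingSecond i : 𝕜) * ((d.ascFactorial i : 𝕜) * r ^ d))
      ((-1) ^ (j - i) * (j.stirlingSecond i : 𝕜) * (i ! * r / (1 - r) ^ (i + 1))) := by
    rintro (_ | i) -
    · obtain ⟨j, rfl⟩ := Nat.exists_eq_add_one_of_ne_zero hj
      simpa only [Nat.stirlingSecond_succ_zero, Nat.cast_zero, mul_zero,
        zero_mul] using hasSum_zero
    · exact (hasSum_ascFactorial_mul_geometric i.succ_ne_zero hr).mul_left _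
  refine (hasSum_sum hterm).congr_fun fun d => ?_
  rw [pow_eq_sum_stirlingSecond_mul_ascPochhammer, sum_mul]
  refine sum_congr rfl fun i _ => ?_
  rw [ascPochhammer_nat_eq_natCast_ascFactorial, mul_assoc]

end GeometricSeries

section Bounds

variable {r : ℝ} {n m : ℕ}

theorem pow_mul_succ_le_ascFactorial (d : ℕ) (hm : m ≠ 0) :
    d ^ m * (d + 1) ≤ d.ascFactorial (m + 1) := by
  induction m, Nat.one_le_iff_ne_zero.2 hm using Nat.le_induction with
  | base => simp [Nat.ascFactorial_succ, mul_comm]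
  | succ m hm ih =>
    calc d ^ (m + 1) * (d + 1) = d * (d ^ m * (d + 1)) := by ring
      _ ≤ (d + (m + 1)) * d.ascFactorial (m + 1) :=
        Nat.mul_le_mul (Nat.le_add_right _ _) (ih (by lia))

theorem pow_div_pow_mul_sub_le_ascFactorial_div {d : ℕ} (hd : d < n) (hm : m ≠ 0) :
    (d : ℝ) ^ m / ((n : ℝ) ^ m * (n - d)) ≤ d.ascFactorial (m + 1) / (n : ℝ) ^ (m + 1) := by
  have hdn : (d : ℝ) + 1 ≤ n := by exact_mod_cast hd
  have hd0 : (0 : ℝ) ≤ d := d.cast_nonneg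
  have hn : (n : ℝ) ≤ (d + 1) * (n - d) := by
    linarith [mul_nonneg hd0 (sub_nonneg.2 hdn)]
  have hasc : (d : ℝ) ^ m * (d + 1) ≤ d.ascFactorial (m + 1) := by
    exact_mod_cast pow_mul_succ_le_ascFactorial d hm
  have hnd : (0 : ℝ) < n - d := by linarith
  have hn0 : (0 : ℝ) < n := by linarith
  rw [div_le_div_iff₀ (by positivity) (by positivity)]
  calc (d : ℝ) ^ m * (n : ℝ) ^ (m + 1) = (d : ℝ) ^ m * (n : ℝ) ^ m * n := by ring
    _ ≤ (d : ℝ) ^ m * (n : ℝ) ^ m * ((d + 1) * (n - d)) := by gcongr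
    _ = (d : ℝ) ^ m * (d + 1) * ((n : ℝ) ^ m * (n - d)) := by ring
    _ ≤ d.ascFactorial (m + 1) * ((n : ℝ) ^ m * (n - d)) := by gcongr

theorem sum_remainder_mul_geometric_le (hr₀ : 0 ≤ r) (hr₁ : r < 1) (n : ℕ) (hm : m ≠ 0) :
    ∑ d ∈ range n, (d : ℝ) ^ m / ((n : ℝ) ^ m * (n - d)) * r ^ d ≤
      (m + 1)! * r / (1 - r) ^ (m + 2) / (n : ℝ) ^ (m + 1) := by
  have hsum := hasSum_ascFactorial_mul_geometric m.succ_ne_zero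
    ((Real.norm_of_nonneg hr₀).trans_lt hr₁)
  calc ∑ d ∈ range n, (d : ℝ) ^ m / ((n : ℝ) ^ m * (n - d)) * r ^ d
      ≤ ∑ d ∈ range n, d.ascFactorial (m + 1) / (n : ℝ) ^ (m + 1) * r ^ d := by
        refine sum_le_sum fun d hd => mul_le_mul_of_nonneg_right ?_ (by positivity)
        exact pow_div_pow_mul_sub_le_ascFactorial_div (mem_range.1 hd) hm
    _ = (∑ d ∈ range n, (d.ascFactorial (m + 1) : ℝ) * r ^ d) / (n : ℝ) ^ (m + 1) := by
        rw [sum_div]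
        exact sum_congr rfl fun d _ => by ring
    _ ≤ _ := by
        gcongr
        exact sum_le_hasSum _ (fun d _ => by positivity) hsum

theorem tsum_add_pow_mul_geometric_le (hr₀ : 0 ≤ r) (hr₁ : r < 1) (hn : n ≠ 0) (j : ℕ) :
    ∑' d : ℕ, ((d + n : ℕ) : ℝ) ^ j * r ^ (d + n) ≤
      (n : ℝ) ^ j * r ^ n * (j ! / (1 - r) ^ (j + 1)) := by
  have hsum := (hasSum_succ_ascFactorial_mul_geometric j
    ((Real.norm_of_nonneg hr₀).trans_lt hr₁)).mul_left ((n : ℝ) ^ j * r ^ n)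
  have hterm : ∀ d : ℕ, ((d + n : ℕ) : ℝ) ^ j * r ^ (d + n) ≤
      (n : ℝ) ^ j * r ^ n * ((d + 1).ascFactorial j * r ^ d) := by
    intro d
    have hbase : d + n ≤ n * (d + 1) := by
      linarith [Nat.le_mul_of_pos_left d (Nat.pos_of_ne_zero hn)]
    have hpow : (d + n) ^ j ≤ n ^ j * (d + 1).ascFactorial j := by
      calc (d + n) ^ j ≤ (n * (d + 1)) ^ j := by gcongr
        _ = n ^ j * (d + 1) ^ j := mul_pow ..
        _ ≤ n ^ j * (d + 1).ascFactorial j := by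
          gcongr
          exact Nat.pow_succ_le_ascFactorial (d + 1) j
    calc ((d + n : ℕ) : ℝ) ^ j * r ^ (d + n)
        ≤ (n : ℝ) ^ j * (d + 1).ascFactorial j * r ^ (d + n) := by
          gcongr
          exact_mod_cast hpow
      _ = (n : ℝ) ^ j * r ^ n * ((d + 1).ascFactorial j * r ^ d) := by ring
  have hsummable := hsum.summable.of_nonneg_of_le (fun d => by positivity) hterm
  exact hasSum_le hterm hsummable.hasSum hsum

end Bounds

section CompletedExpansion

variable {K : Type*} [NormedField K] {q : K}

/-- The sum of the tails `d ≥ n` of the series that complete the inner sums `∑ d < n` of the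
order `m` expansion of `∑ k ∈ Icc 1 n, q ^ k / k`. -/
noncomputable def completionError (q : K) (n m : ℕ) : K :=
  ∑ j ∈ range m, q ^ n / (n : K) ^ (j + 1) * ∑' d : ℕ, ((d + n : ℕ) : K) ^ j * q⁻¹ ^ (d + n)

theorem ne_zero_of_one_lt_norm (hq : 1 < ‖q‖) : q ≠ 0 :=
  norm_pos_iff.1 (one_pos.trans hq)

theorem norm_inv_lt_one (hq : 1 < ‖q‖) : ‖q⁻¹‖ < 1 := by
  rw [norm_inv]
  exact inv_lt_one_of_one_lt₀ hq

theorem sum_Icc_pow_div_sub_eq_truncationError_sub_completionError [CharZero K] (hq : 1 < ‖q‖)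
    (n m : ℕ) :
    ∑ k ∈ Icc 1 n, q ^ k / k -
        ∑ j ∈ range m, q ^ n / (n : K) ^ (j + 1) * ∑' d : ℕ, (d : K) ^ j * q⁻¹ ^ d =
      truncationError q n m - completionError q n m := by
  have hsplit (j : ℕ) := (summable_pow_mul_geometric_of_norm_lt_one j
    (norm_inv_lt_one hq)).sum_add_tsum_nat_add n
  simp only [sum_Icc_pow_div_eq_sum_add_truncationError (ne_zero_of_one_lt_norm hq) n m,
    ← hsplit, mul_add, sum_add_distrib, completionError]
  ring

theorem div_one_sub_inv_pow (hq : q ≠ 0) (c : K) (k : ℕ) :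
    c / (1 - q⁻¹) ^ k = c * (q / (q - 1)) ^ k := by
  rw [show 1 - q⁻¹ = (q - 1) / q by field_simp, div_eq_mul_inv, ← inv_pow, inv_div]

theorem tsum_pow_mul_inv_pow {j : ℕ} (hj : j ≠ 0) (hq : 1 < ‖q‖) :
    ∑' d : ℕ, (d : K) ^ j * q⁻¹ ^ d = ∑ i ∈ range (j + 1),
      (-1) ^ (j - i) * (i ! : K) * (j.stirlingSecond i : K) * q ^ i / (q - 1) ^ (i + 1) := by
  have hq₀ := ne_zero_of_one_lt_norm hq
  rw [(hasSum_pow_mul_geometric hj (norm_inv_lt_one hq)).tsum_eq]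
  refine sum_congr rfl fun i _ => ?_
  rw [div_one_sub_inv_pow hq₀, div_pow, pow_succ q]
  field_simp

theorem sum_range_mul_tsum_eq_add_sum_Icc (hq : 1 < ‖q‖) (n : ℕ) {m : ℕ} (hm : m ≠ 0) :
    ∑ j ∈ range m, q ^ n / (n : K) ^ (j + 1) * ∑' d : ℕ, (d : K) ^ j * q⁻¹ ^ d =
      q ^ (n + 1) / ((q - 1) * n) +
        ∑ j ∈ Icc 1 (m - 1), q ^ n / (n : K) ^ (j + 1) * ∑ i ∈ range (j + 1),
          (-1) ^ (j - i) * (i ! : K) * (j.stirlingSecond i : K) * q ^ i / (q - 1) ^ (i + 1) := by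
  have hq₀ := ne_zero_of_one_lt_norm hq
  rw [sum_range_eq_add_Ico _ (Nat.pos_of_ne_zero hm), ← Ico_add_one_right_eq_Icc,
    Nat.sub_one_add_one hm]
  congr 1
  · simp only [pow_zero, one_mul, zero_add, pow_one,
      tsum_geometric_of_norm_lt_one (norm_inv_lt_one hq)]
    rw [show 1 - q⁻¹ = (q - 1) / q by field_simp, inv_div, div_mul_div_comm, pow_succ,
      mul_comm (n : K)]
  · refine sum_congr rfl fun j hj => ?_
    rw [tsum_pow_mul_inv_pow (by have := (mem_Ico.1 hj).1; lia) hq]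

end CompletedExpansion

section ErrorBounds

variable {q : ℝ} {n m : ℕ}

theorem truncationError_nonneg (hq : 0 ≤ q) (n m : ℕ) : 0 ≤ truncationError q n m := by
  refine mul_nonneg (by positivity) (sum_nonneg fun d hd => ?_)
  have hdn : (0 : ℝ) ≤ n - d := sub_nonneg.2 (Nat.cast_le.2 (mem_range.1 hd).le)
  positivity

theorem completionError_nonneg (hq : 0 ≤ q) (n m : ℕ) : 0 ≤ completionError q n m := by
  unfold completionError
  positivity

theorem truncationError_le (hq : 1 < q) (hn : n ≠ 0) (hm : m ≠ 0) :
    truncationError q n m ≤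
      (m + 1)! * (q / (q - 1)) ^ (m + 2) * q ^ (n - 1) / (n : ℝ) ^ (m + 1) := by
  have hq₀ : 0 < q := one_pos.trans hq
  calc truncationError q n m
      ≤ q ^ n * ((m + 1)! * q⁻¹ / (1 - q⁻¹) ^ (m + 2) / (n : ℝ) ^ (m + 1)) := by
        unfold truncationError
        gcongr
        exact sum_remainder_mul_geometric_le (by positivity) (inv_lt_one_of_one_lt₀ hq) n hm
    _ = _ := by
        rw [div_one_sub_inv_pow hq₀.ne', ← pow_sub_one_mul hn q]
        field_simp

theorem completionError_le (hq : 1 < q) (hn : n ≠ 0) (m : ℕ) :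
    completionError q n m ≤ (∑ j ∈ range m, j ! * (q / (q - 1)) ^ (j + 1)) / n := by
  have hq₀ : 0 < q := one_pos.trans hq
  have hn₀ : (n : ℝ) ≠ 0 := Nat.cast_ne_zero.2 hn
  rw [completionError, sum_div]
  refine sum_le_sum fun j _ => ?_
  calc q ^ n / (n : ℝ) ^ (j + 1) * ∑' d : ℕ, ((d + n : ℕ) : ℝ) ^ j * q⁻¹ ^ (d + n)
      ≤ q ^ n / (n : ℝ) ^ (j + 1) * ((n : ℝ) ^ j * q⁻¹ ^ n * (j ! / (1 - q⁻¹) ^ (j + 1))) := by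
        gcongr
        exact tsum_add_pow_mul_geometric_le (by positivity) (inv_lt_one_of_one_lt₀ hq) hn j
    _ = j ! * (q / (q - 1)) ^ (j + 1) / n := by
        rw [div_one_sub_inv_pow hq₀.ne', inv_pow, pow_succ (n : ℝ)]
        field_simp

theorem div_sub_one_pow_le_two_pow (hq : 2 ≤ q) (k : ℕ) : (q / (q - 1)) ^ k ≤ 2 ^ k := by
  have hq₁ : 0 < q - 1 := by linarith
  refine pow_le_pow_left₀ (div_nonneg (by linarith) hq₁.le) ?_ k
  rw [div_le_iff₀ hq₁]
  linarith

theorem mul_two_pow_le_three_pow : ∀ n : ℕ, n * 2 ^ n ≤ 3 ^ n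
  | 0 => by norm_num
  | 1 => by norm_num
  | 2 => by norm_num
  | n + 3 => by
    calc (n + 3) * 2 ^ (n + 3) = (2 * n + 6) * 2 ^ (n + 2) := by ring
      _ ≤ 3 * (n + 2) * 2 ^ (n + 2) := by gcongr; lia
      _ ≤ 3 * 3 ^ (n + 2) := by
        rw [mul_assoc]
        exact Nat.mul_le_mul_left 3 (mul_two_pow_le_three_pow (n + 2))
      _ = 3 ^ (n + 3) := by ring

theorem factorial_succ_mul_two_pow_le (m : ℕ) : (m + 1)! * 2 ^ (m + 2) ≤ 3 ^ (m + 3) * m ! := by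
  calc (m + 1)! * 2 ^ (m + 2) = (m + 1) * 2 ^ (m + 2) * m ! := by
        rw [Nat.factorial_succ]
        ring
    _ ≤ (m + 2) * 2 ^ (m + 2) * m ! := by gcongr; lia
    _ ≤ 3 ^ (m + 2) * m ! := by gcongr; exact mul_two_pow_le_three_pow (m + 2)
    _ ≤ 3 ^ (m + 3) * m ! := by gcongr <;> lia

theorem sum_factorial_mul_two_pow_le (m : ℕ) :
    ∑ j ∈ range m, j ! * 2 ^ (j + 1) ≤ 2 ^ (m + 1) * m ! := by
  induction m with
  | zero => simp
  | succ m ih =>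
    calc ∑ j ∈ range (m + 1), j ! * 2 ^ (j + 1)
        ≤ 2 ^ (m + 1) * m ! + m ! * 2 ^ (m + 1) := by
          rw [sum_range_succ]
          gcongr
      _ = 2 ^ (m + 1 + 1) * m ! := by ring
      _ ≤ 2 ^ (m + 1 + 1) * (m + 1)! := by
          gcongr
          exact m.le_succ

theorem factorial_succ_mul_div_sub_one_pow_le (hq : 2 ≤ q) (m : ℕ) :
    (m + 1)! * (q / (q - 1)) ^ (m + 2) ≤ 3 ^ (m + 3) * m ! := by
  calc (m + 1)! * (q / (q - 1)) ^ (m + 2)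
      ≤ (m + 1)! * 2 ^ (m + 2) :=
        mul_le_mul_of_nonneg_left (div_sub_one_pow_le_two_pow hq _) (Nat.cast_nonneg _)
    _ ≤ 3 ^ (m + 3) * m ! := by exact_mod_cast factorial_succ_mul_two_pow_le m

theorem sum_factorial_mul_div_sub_one_pow_le (hq : 2 ≤ q) (m : ℕ) :
    ∑ j ∈ range m, j ! * (q / (q - 1)) ^ (j + 1) ≤ 2 ^ (m + 1) * m ! := by
  calc ∑ j ∈ range m, j ! * (q / (q - 1)) ^ (j + 1)
      ≤ ∑ j ∈ range m, (j ! : ℝ) * 2 ^ (j + 1) := sum_le_sum fun j _ =>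
        mul_le_mul_of_nonneg_left (div_sub_one_pow_le_two_pow hq _) (Nat.cast_nonneg _)
    _ ≤ 2 ^ (m + 1) * m ! := by exact_mod_cast sum_factorial_mul_two_pow_le m

end ErrorBounds

theorem stmt_15_general (q : ℝ) (hq : 1 < q) (n m : ℕ) (hn : 1 ≤ n) (hm : 1 ≤ m) :
    |∑ k ∈ Icc 1 n, q ^ k / k - q ^ (n + 1) / ((q - 1) * n) -
        ∑ j ∈ Icc 1 (m - 1), q ^ n / (n : ℝ) ^ (j + 1) *
          ∑ i ∈ range (j + 1),
            (-1 : ℝ) ^ (j - i) * i ! * stirling2 j i * q ^ i / (q - 1) ^ (i + 1)| ≤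
      (m + 1)! * (q / (q - 1)) ^ (m + 2) * q ^ (n - 1) / (n : ℝ) ^ (m + 1) +
        (∑ j ∈ range m, j ! * (q / (q - 1)) ^ (j + 1)) / n := by
  have hn₀ : n ≠ 0 := Nat.one_le_iff_ne_zero.1 hn
  have hm₀ : m ≠ 0 := Nat.one_le_iff_ne_zero.1 hm
  have hq₀ : 0 ≤ q := (one_pos.trans hq).le
  have hq_norm : 1 < ‖q‖ := by rwa [Real.norm_of_nonneg hq₀]
  simp only [stirling2_eq_stirlingSecond]
  rw [sub_sub, ← sum_range_mul_tsum_eq_add_sum_Icc hq_norm n hm₀,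
    sum_Icc_pow_div_sub_eq_truncationError_sub_completionError hq_norm, abs_le]
  have htrunc := truncationError_le hq hn₀ hm₀
  have hcompl := completionError_le hq hn₀ m
  have htrunc₀ := truncationError_nonneg hq₀ n m
  have hcompl₀ := completionError_nonneg hq₀ n m
  constructor <;> linarith

theorem stmt_15 (q : ℝ) (hq : 2 ≤ q) (n m : ℕ) (hn : 1 ≤ n) (hm : 1 ≤ m) :
    |∑ k ∈ Finset.Icc 1 n, q ^ k / k - q ^ (n + 1) / ((q - 1) * n) -
        ∑ j ∈ Finset.Icc 1 (m - 1), (q ^ n / (n : ℝ) ^ (j + 1)) *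
          ∑ i ∈ Finset.range (j + 1),
            (-1 : ℝ) ^ (j - i) * (Nat.factorial i) * (stirling2 j i) *
              q ^ i / (q - 1) ^ (i + 1)| ≤
      3 ^ (m + 3) * (Nat.factorial m) * q ^ (n - 1) / (n : ℝ) ^ (m + 1) +
        2 ^ (m + 1) * (Nat.factorial m) / n := by
  refine (stmt_15_general q (by linarith) n m hn hm).trans ?_
  gcongr ?_ * _ / _ + ?_ / _
  · exact factorial_succ_mul_div_sub_one_pow_le hq m
  · exact sum_factorial_mul_div_sub_one_pow_le hq m
end
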